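/- arXiv:2511.01073 — 7 statements merged into one kernel-verified Lean document; each statement's English description precedes it below -/
import Mathlib

section
/- If there exists an EA(q)-additive (v,k,1)-design, then q is a power of a prime that divides (v−k)/(k−1). -/
/-!
Let `σ` be the sum of all points and let `r` be the number of blocks through a point `x`.
The blocks through `x`, with `x` removed, partition the remaining points. Counting gives
`v - 1 = r (k - 1)`, so `r` does not depend on `x` and `(v - k) / (k - 1) = r - 1`. Adding up
the zero sums of the blocks through `x` gives `r x + (σ - x) = 0`, that is `(r - 1) x = -σ`.
Comparing two distinct points `x` and `y` yields `(r - 1)(x - y) = 0`, so `r - 1` is zero in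
the field and is divisible by its characteristic.
-/

/-- A `(v,k,1)`-design (Steiner 2-design) with point set `V` and block collection `Bs`:
`V` has `v` points, every block is a `k`-subset of `V`, and every pair of distinct
points of `V` is contained in exactly one block. -/
def IsSteinerDesign {α : Type*} [DecidableEq α] (V : Finset α) (Bs : Finset (Finset α))
    (v k : ℕ) : Prop :=
  V.card = v ∧ (∀ b ∈ Bs, b ⊆ V ∧ b.card = k) ∧
    ∀ x ∈ V, ∀ y ∈ V, x ≠ y → ∃! b, b ∈ Bs ∧ x ∈ b ∧ y ∈ b

/-- The blocks through `x`, with `x` removed, partition the other points; hence summing `f`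
over all of these blocks counts every other point once and `x` once per block. -/
lemma IsSteinerDesign.sum_blocks_through {α M : Type*} [DecidableEq α] [AddCommMonoid M]
    {V : Finset α} {Bs : Finset (Finset α)} {v k : ℕ} (h : IsSteinerDesign V Bs v k)
    {x : α} (hx : x ∈ V) (f : α → M) :
    ∑ b ∈ Bs with x ∈ b, ∑ y ∈ b, f y
      = (Bs.filter (x ∈ ·)).card • f x + ∑ y ∈ V.erase x, f y := by
  obtain ⟨-, hb, hpair⟩ := h
  have hpart : V.erase x = (Bs.filter (x ∈ ·)).biUnion (fun b => b.erase x) := by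
    ext y
    simp only [Finset.mem_erase, Finset.mem_biUnion, Finset.mem_filter]
    constructor
    · rintro ⟨hyx, hy⟩
      obtain ⟨b, ⟨hbB, hxb, hyb⟩, -⟩ := hpair x hx y hy hyx.symm
      exact ⟨b, ⟨hbB, hxb⟩, hyx, hyb⟩
    · rintro ⟨b, ⟨hbB, -⟩, hyx, hyb⟩
      exact ⟨hyx, (hb b hbB).1 hyb⟩
  rw [hpart, Finset.sum_biUnion, ← Finset.sum_const, ← Finset.sum_add_distrib]
  · refine Finset.sum_congr rfl fun b hbx => ?_
    exact (Finset.add_sum_erase b f (Finset.mem_filter.1 hbx).2).symm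
  · intro b hb₁ c hc₁ hbc
    have hb₂ := Finset.mem_filter.1 hb₁
    have hc₂ := Finset.mem_filter.1 hc₁
    refine Finset.disjoint_left.2 fun y hyb hyc => hbc ?_
    obtain ⟨hyx, hyb⟩ := Finset.mem_erase.1 hyb
    have hyc := Finset.mem_of_mem_erase hyc
    exact (hpair x hx y ((hb b hb₂.1).1 hyb) hyx.symm).unique
      ⟨hb₂.1, hb₂.2, hyb⟩ ⟨hc₂.1, hc₂.2, hyc⟩

/-- The number `r` of blocks through a point is `(v - k) / (k - 1) + 1`, since counting the
other points gives `v - 1 = r (k - 1)`; in particular the division is exact. -/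
lemma IsSteinerDesign.card_blocks_through {α : Type*} [DecidableEq α]
    {V : Finset α} {Bs : Finset (Finset α)} {v k : ℕ} (h : IsSteinerDesign V Bs v k)
    (hk : 2 < k) (hkv : k < v) {x : α} (hx : x ∈ V) :
    (Bs.filter (x ∈ ·)).card = (v - k) / (k - 1) + 1 := by
  have hs := h.sum_blocks_through hx (fun _ => (1 : ℕ))
  have hleft : ∑ b ∈ Bs with x ∈ b, ∑ _y ∈ b, 1 = (Bs.filter (x ∈ ·)).card * k := by
    rw [← smul_eq_mul, ← Finset.sum_const]
    refine Finset.sum_congr rfl fun b hb => ?_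
    rw [← Finset.card_eq_sum_ones, (h.2.1 b (Finset.mem_filter.1 hb).1).2]
  rw [hleft, ← Finset.card_eq_sum_ones, Finset.card_erase_of_mem hx, h.1, smul_eq_mul,
    mul_one] at hs
  generalize (Bs.filter (x ∈ ·)).card = r at hs ⊢
  obtain ⟨j, rfl⟩ : ∃ j, k = j + 1 := ⟨k - 1, by omega⟩
  rcases r with _ | s
  · omega
  · have : v - (j + 1) = s * j := by
      have h1 : (s + 1) * (j + 1) = s * j + s + j + 1 := by ring
      omega
    rw [this, Nat.add_sub_cancel, Nat.mul_div_cancel _ (by omega)]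

/-- If there exists an `EA(q)`-additive `(v,k,1)`-design (points in `𝔽_q`, all blocks
zero-sum), then `q` is a power of a prime dividing `(v-k)/(k-1)`. -/
theorem stmt0 (q v k : ℕ) (hvk : 2 < k ∧ k < v)
    (F : Type*) [Field F] [Fintype F] [DecidableEq F] (hF : Fintype.card F = q)
    (V : Finset F) (Bs : Finset (Finset F))
    (hdes : IsSteinerDesign V Bs v k)
    (hadd : ∀ b ∈ Bs, ∑ x ∈ b, x = 0) :
    ∃ p m : ℕ, p.Prime ∧ p ∣ (v - k) / (k - 1) ∧ q = p ^ m := by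
  obtain ⟨p, hp⟩ := CharP.exists F
  obtain ⟨m, hprime, hcard⟩ := FiniteField.card F p
  refine ⟨p, m, hprime, ?_, hF.symm.trans hcard⟩
  have key : ∀ x ∈ V, (((v - k) / (k - 1) : ℕ) : F) * x + ∑ y ∈ V, y = 0 := by
    intro x hx
    have hs := hdes.sum_blocks_through hx (fun y => y)
    rw [Finset.sum_eq_zero fun b hb => hadd b (Finset.mem_filter.1 hb).1,
      hdes.card_blocks_through hvk.1 hvk.2 hx, nsmul_eq_mul, Nat.cast_add_one] at hs
    rw [← Finset.add_sum_erase V (fun y => y) hx, hs]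
    ring
  obtain ⟨x, hx, y, hy, hxy⟩ := Finset.one_lt_card.1 (show 1 < V.card by rw [hdes.1]; omega)
  rw [← CharP.cast_eq_zero_iff F p]
  refine (mul_eq_zero.1 ?_).resolve_right (sub_ne_zero.2 hxy)
  linear_combination key x hx - key y hy
end

section
/- Let (V,𝓑) be a (v,k,1)-design whose points are elements of an abelian group G and all of whose blocks are zero-sum in G, and let r = (v−1)/(k−1) be the replication number (the number of blocks through any point). Then the sum σ of all points of V satisfies σ = (1−r)·x for every point x; consequently (r−1)·(x−y) = 0 in G for every pair of points x, y. -/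
section

variable {α : Type*} [DecidableEq α] {V : Finset α} {Bs : Finset (Finset α)} {v k : ℕ}

theorem IsSteinerDesign.erase_eq_biUnion (h : IsSteinerDesign V Bs v k) {x : α} (hx : x ∈ V) :
    V.erase x = (Bs.filter (x ∈ ·)).biUnion (fun b => b.erase x) := by
  ext y
  simp only [Finset.mem_erase, Finset.mem_biUnion, Finset.mem_filter]
  constructor
  · rintro ⟨hne, hy⟩
    obtain ⟨b, ⟨hb, hxb, hyb⟩, -⟩ := h.2.2 x hx y hy hne.symm
    exact ⟨b, ⟨hb, hxb⟩, hne, hyb⟩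
  · rintro ⟨b, ⟨hb, -⟩, hne, hyb⟩
    exact ⟨hne, (h.2.1 b hb).1 hyb⟩

theorem IsSteinerDesign.pairwiseDisjoint_erase (h : IsSteinerDesign V Bs v k) {x : α}
    (hx : x ∈ V) :
    ((Bs.filter (x ∈ ·) : Finset (Finset α)) : Set (Finset α)).PairwiseDisjoint
      (fun b => b.erase x) := by
  intro b hb c hc hbc
  simp only [Finset.coe_filter, Set.mem_ofPred_eq] at hb hc
  refine Finset.disjoint_left.2 fun y hyb hyc => hbc ?_
  rw [Finset.mem_erase] at hyb hyc
  exact (h.2.2 x hx y ((h.2.1 b hb.1).1 hyb.2) hyb.1.symm).unique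
    ⟨hb.1, hb.2, hyb.2⟩ ⟨hc.1, hc.2, hyc.2⟩

/-- Double counting of the points other than `x`. -/
theorem IsSteinerDesign.card_blocks_mul (h : IsSteinerDesign V Bs v k) {x : α} (hx : x ∈ V) :
    (Bs.filter (x ∈ ·)).card * (k - 1) = v - 1 := by
  rw [← h.1, ← Finset.card_erase_of_mem hx, h.erase_eq_biUnion hx,
    Finset.card_biUnion (h.pairwiseDisjoint_erase hx), Finset.sum_const_nat]
  intro b hb
  rw [Finset.mem_filter] at hb
  rw [Finset.card_erase_of_mem hb.2, (h.2.1 b hb.1).2]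

end

/-- For a `(v,k,1)`-design with points in an abelian group `G` and all blocks zero-sum,
with replication number `r = (v-1)/(k-1)`, the sum `σ` of all points satisfies
`σ = (1-r)·x` for every point `x`; consequently `(r-1)·(x-y) = 0` for all points `x, y`. -/
theorem stmt1 (G : Type*) [AddCommGroup G] [DecidableEq G] (v k r : ℕ)
    (hvk : 2 < k ∧ k < v)
    (V : Finset G) (Bs : Finset (Finset G))
    (hdes : IsSteinerDesign V Bs v k)
    (hadd : ∀ b ∈ Bs, ∑ x ∈ b, x = 0)
    (hr : r = (v - 1) / (k - 1)) :
    (∀ x ∈ V, ∑ z ∈ V, z = ((1 : ℤ) - (r : ℤ)) • x) ∧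
    ∀ x ∈ V, ∀ y ∈ V, ((r : ℤ) - 1) • (x - y) = 0 := by
  have key : ∀ x ∈ V, ∑ z ∈ V, z = ((1 : ℤ) - (r : ℤ)) • x := by
    intro x hx
    have hm : (Bs.filter (x ∈ ·)).card = r := by
      rw [hr, ← hdes.card_blocks_mul hx, Nat.mul_div_cancel _ (by omega)]
    have hsum : ∑ z ∈ V.erase x, z = -(r • x) := by
      rw [hdes.erase_eq_biUnion hx, Finset.sum_biUnion (hdes.pairwiseDisjoint_erase hx), ← hm,
        ← smul_neg, ← Finset.sum_const]
      refine Finset.sum_congr rfl fun b hb => ?_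
      rw [Finset.mem_filter] at hb
      rw [eq_neg_iff_add_eq_zero, Finset.sum_erase_add _ _ hb.2, hadd b hb.1]
    rw [← Finset.sum_erase_add _ _ hx, hsum, sub_smul, one_smul, natCast_zsmul]
    abel
  refine ⟨key, fun x hx y hy => ?_⟩
  rw [← neg_sub (1 : ℤ), neg_smul, smul_sub, ← key x hx, ← key y hy, sub_self, neg_zero]
end

section
/- Let G be a cyclic group of order v with v ≡ k (mod k(k−1)), let H be the subgroup of G of order k, and let 𝓕 be a (G,H,k,1) difference family. Then the pair (G, {Bg : B ∈ 𝓕, g ∈ G} ∪ {cosets of H in G}) is a (v,k,1)-design, i.e., every pair of distinct elements of G is contained in exactly one of these blocks; moreover, translation by any element of G maps this block collection to itself, so the design is cyclic. -/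
/-- The list (multiset) of differences of a family of finite subsets of a multiplicative
structure: all ratios `x * y⁻¹` with `(x,y)` an ordered pair of distinct elements of a
common member. -/
def diffList {α : Type*} [DecidableEq α] [Mul α] [Inv α]
    (Fam : Finset (Finset α)) : Multiset α :=
  Fam.1.bind fun b => ((b ×ˢ b).filter fun p => p.1 ≠ p.2).1.map fun p => p.1 * p.2⁻¹

/-- `(R,H,k,lam)` difference family inside the "group" `R` (given as a finset of the
ambient structure): a family of `k`-subsets of `R` whose list of differences is `lam`
times the set `R \ H`. -/
def IsDiffFamilyOn {α : Type*} [DecidableEq α] [Mul α] [Inv α]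
    (R H : Finset α) (k lam : ℕ) (Fam : Finset (Finset α)) : Prop :=
  (∀ b ∈ Fam, b ⊆ R ∧ b.card = k) ∧ diffList Fam = lam • (R \ H).val

/-- All translates `B * g` of the base blocks of `Fam`. -/
def translates {G : Type*} [Group G] [Fintype G] [DecidableEq G]
    (Fam : Finset (Finset G)) : Finset (Finset G) :=
  (Fam ×ˢ (Finset.univ : Finset G)).image fun p => p.1.image (· * p.2)


section DifferenceFamily

variable {G : Type*} [Group G] [DecidableEq G]

lemma mem_diffList {Fam : Finset (Finset G)} {d : G} :
    d ∈ diffList Fam ↔ ∃ b ∈ Fam, ∃ x ∈ b, ∃ y ∈ b, x ≠ y ∧ x * y⁻¹ = d := by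
  simp only [diffList, Multiset.mem_bind, Multiset.mem_map, Finset.mem_val, Finset.mem_filter,
    Finset.mem_product, Prod.exists]
  grind

lemma mem_image_mul_right {b : Finset G} {g x : G} :
    x ∈ b.image (· * g) ↔ x * g⁻¹ ∈ b := by
  simp

lemma image_mul_right_image (b : Finset G) (g h : G) :
    (b.image (· * g)).image (· * h) = b.image (· * (g * h)) := by
  simp only [Finset.image_image, Function.comp_def, mul_assoc]

variable [Fintype G] {H : Finset G} {k : ℕ} {Fam : Finset (Finset G)}

lemma exists_of_notMem (hDF : IsDiffFamilyOn Finset.univ H k 1 Fam) {d : G} (hd : d ∉ H) :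
    ∃ b ∈ Fam, ∃ x ∈ b, ∃ y ∈ b, x ≠ y ∧ x * y⁻¹ = d := by
  rw [← mem_diffList, hDF.2, one_smul, Finset.mem_val]
  simpa using hd

lemma ratio_notMem (hDF : IsDiffFamilyOn Finset.univ H k 1 Fam) {b : Finset G} (hb : b ∈ Fam)
    {x y : G} (hx : x ∈ b) (hy : y ∈ b) (hxy : x ≠ y) : x * y⁻¹ ∉ H := by
  have h : x * y⁻¹ ∈ diffList Fam := mem_diffList.2 ⟨b, hb, x, hx, y, hy, hxy, rfl⟩
  rw [hDF.2, one_smul, Finset.mem_val] at h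
  simpa using h

/-- Since `λ = 1`, the list of differences has no repetition: a ratio determines the base block
it comes from and the pair of points realizing it. -/
lemma eq_of_ratio_eq (hDF : IsDiffFamilyOn Finset.univ H k 1 Fam) {b c : Finset G}
    (hb : b ∈ Fam) (hc : c ∈ Fam) {x y z w : G} (hx : x ∈ b) (hy : y ∈ b) (hxy : x ≠ y)
    (hz : z ∈ c) (hw : w ∈ c) (hzw : z ≠ w) (h : x * y⁻¹ = z * w⁻¹) : b = c ∧ x = z := by
  have hnd : (diffList Fam).Nodup := by
    rw [hDF.2, one_smul]
    exact Finset.nodup _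
  rw [diffList, Multiset.nodup_bind] at hnd
  obtain ⟨hnd₁, hnd₂⟩ := hnd
  have hbc : b = c := by
    by_contra hne
    have hdis := hnd₂.forall hb hc hne
    exact Multiset.disjoint_left.1 hdis
      (Multiset.mem_map.2 ⟨(x, y), by simp [*], rfl⟩)
      (Multiset.mem_map.2 ⟨(z, w), by simp [*], h.symm⟩)
  subst hbc
  have hp := Multiset.inj_on_of_nodup_map (hnd₁ b hb) (x, y) (by simp [*]) (z, w) (by simp [*]) h
  exact ⟨rfl, congrArg Prod.fst hp⟩

lemma mem_translates {t : Finset G} :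
    t ∈ translates Fam ↔ ∃ b ∈ Fam, ∃ g : G, b.image (· * g) = t := by
  simp [translates]

end DifferenceFamily

/-- If `G` is cyclic of order `v ≡ k (mod k(k-1))`, `H` is the subgroup of `G` of order `k`,
and `𝓕` is a `(G,H,k,1)` difference family, then `G` together with all translates `Bg` of
the base blocks and all cosets of `H` is a `(v,k,1)`-design, and translation by any element
of `G` maps this block collection to itself (so the design is cyclic). -/
theorem stmt3 (G : Type*) [Group G] [Fintype G] [DecidableEq G] [IsCyclic G]
    (v k : ℕ) (hvk : 2 < k ∧ k < v) (hv : Fintype.card G = v)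
    (hcong : v % (k * (k - 1)) = k % (k * (k - 1)))
    (H : Finset G) (hH1 : (1 : G) ∈ H)
    (hHsub : ∀ a ∈ H, ∀ b ∈ H, a * b⁻¹ ∈ H) (hHcard : H.card = k)
    (Fam : Finset (Finset G))
    (hDF : IsDiffFamilyOn (Finset.univ : Finset G) H k 1 Fam) :
    IsSteinerDesign (Finset.univ : Finset G)
      (translates Fam ∪ Finset.univ.image fun g : G => H.image (· * g)) v k ∧
    ∀ g : G,
      (translates Fam ∪ Finset.univ.image fun g' : G => H.image (· * g')).image
          (fun b => b.image (· * g)) =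
        translates Fam ∪ Finset.univ.image fun g' : G => H.image (· * g') := by
  have hmem : ∀ t : Finset G,
      t ∈ translates Fam ∪ (Finset.univ.image fun g : G => H.image (· * g)) ↔
        (∃ b ∈ Fam, ∃ g : G, b.image (· * g) = t) ∨ ∃ g : G, H.image (· * g) = t := by
    intro t
    rw [Finset.mem_union, mem_translates]
    simp
  have hinv : ∀ a ∈ H, a⁻¹ ∈ H := fun a ha => by simpa using hHsub 1 hH1 a ha
  have hmul : ∀ a ∈ H, ∀ b ∈ H, a * b ∈ H := fun a ha b hb => by
    simpa using hHsub a ha b⁻¹ (hinv b hb)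
  refine ⟨⟨by simpa using hv, ?_, ?_⟩, ?_⟩
  · intro t ht
    refine ⟨Finset.subset_univ t, ?_⟩
    rcases (hmem t).1 ht with ⟨b, hb, g, rfl⟩ | ⟨g, rfl⟩
    · rw [Finset.card_image_of_injective _ (mul_left_injective g), (hDF.1 b hb).2]
    · rw [Finset.card_image_of_injective _ (mul_left_injective g), hHcard]
  · intro x _ y _ hxy
    by_cases hd : x * y⁻¹ ∈ H
    · refine ⟨H.image (· * y), ⟨(hmem _).2 (Or.inr ⟨y, rfl⟩), mem_image_mul_right.2 hd,
        mem_image_mul_right.2 (by simpa using hH1)⟩, ?_⟩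
      rintro t ⟨ht, hxt, hyt⟩
      rcases (hmem t).1 ht with ⟨b, hb, g, rfl⟩ | ⟨g, rfl⟩
      · rw [mem_image_mul_right] at hxt hyt
        exact absurd hd (by simpa using ratio_notMem hDF hb hxt hyt (by simpa using hxy))
      · rw [mem_image_mul_right] at hyt
        ext z
        rw [mem_image_mul_right, mem_image_mul_right]
        constructor
        · intro hz
          simpa using hHsub _ hz _ hyt
        · intro hz
          simpa [mul_assoc] using hmul _ hz _ hyt
    · obtain ⟨b, hb, p, hp, q, hq, hpq, hpqd⟩ := exists_of_notMem hDF hd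
      have hy : y * (p⁻¹ * x)⁻¹ = q := by
        have : x = p * q⁻¹ * y := by rw [hpqd]; group
        rw [this]; group
      refine ⟨b.image (· * (p⁻¹ * x)), ⟨(hmem _).2 (Or.inl ⟨b, hb, _, rfl⟩),
        mem_image_mul_right.2 (by simpa using hp), mem_image_mul_right.2 (by rwa [hy])⟩, ?_⟩
      rintro t ⟨ht, hxt, hyt⟩
      rcases (hmem t).1 ht with ⟨c, hc, g, rfl⟩ | ⟨g, rfl⟩
      · rw [mem_image_mul_right] at hxt hyt
        obtain ⟨rfl, hpx⟩ := eq_of_ratio_eq hDF hb hc hp hq hpq hxt hyt (by simpa using hxy)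
          (by rw [hpqd]; group)
        have hg : p⁻¹ * x = g := by rw [hpx]; group
        rw [hg]
      · rw [mem_image_mul_right] at hxt hyt
        exact absurd (by simpa using hHsub _ hxt _ hyt) hd
  · intro g
    ext t
    rw [Finset.mem_image, hmem]
    constructor
    · rintro ⟨s, hs, rfl⟩
      rcases (hmem s).1 hs with ⟨b, hb, g', rfl⟩ | ⟨g', rfl⟩
      · exact Or.inl ⟨b, hb, g' * g, (image_mul_right_image b g' g).symm⟩
      · exact Or.inr ⟨g' * g, (image_mul_right_image H g' g).symm⟩
    · rintro (⟨b, hb, g', rfl⟩ | ⟨g', rfl⟩)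
      · exact ⟨b.image (· * (g' * g⁻¹)), (hmem _).2 (Or.inl ⟨b, hb, _, rfl⟩), by
          rw [image_mul_right_image, inv_mul_cancel_right]⟩
      · exact ⟨H.image (· * (g' * g⁻¹)), (hmem _).2 (Or.inr ⟨_, rfl⟩), by
          rw [image_mul_right_image, inv_mul_cancel_right]⟩
end

section
/- For every prime power q with q ≡ 1 (mod 100), there is no EA(q)-additive (100,4,1)-design. (Indeed, any EA(q)-additive (100,4,1)-design forces q to be a power of 2, and no power of 2 is congruent to 1 modulo 100.) -/
/-- The blocks through `x`, with `x` removed, partition the remaining points. -/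
lemma IsSteinerDesign.sum_erase {α M : Type*} [DecidableEq α] [AddCommMonoid M]
    {V : Finset α} {Bs : Finset (Finset α)} {v k : ℕ} (h : IsSteinerDesign V Bs v k)
    {x : α} (hx : x ∈ V) (f : α → M) :
    ∑ y ∈ V.erase x, f y = ∑ b ∈ Bs with x ∈ b, ∑ y ∈ b.erase x, f y := by
  obtain ⟨-, hB, hU⟩ := h
  have hpart : V.erase x = (Bs.filter (x ∈ ·)).biUnion (fun b => b.erase x) := by
    ext y
    simp only [Finset.mem_erase, Finset.mem_biUnion, Finset.mem_filter]
    constructor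
    · rintro ⟨hne, hy⟩
      obtain ⟨b, ⟨hb, hxb, hyb⟩, -⟩ := hU x hx y hy hne.symm
      exact ⟨b, ⟨hb, hxb⟩, hne, hyb⟩
    · rintro ⟨b, ⟨hb, -⟩, hne, hyb⟩
      exact ⟨hne, (hB b hb).1 hyb⟩
  rw [hpart, Finset.sum_biUnion]
  intro b hb c hc hbc
  rw [Finset.mem_coe, Finset.mem_filter] at hb hc
  refine Finset.disjoint_left.2 fun y hyb hyc => hbc ?_
  rw [Finset.mem_erase] at hyb hyc
  exact (hU x hx y ((hB b hb.1).1 hyb.2) hyb.1.symm).unique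
    ⟨hb.1, hb.2, hyb.2⟩ ⟨hc.1, hc.2, hyc.2⟩

lemma thirtyTwo_mul_add_sum {F : Type*} [Field F] [DecidableEq F] {V : Finset F}
    {Bs : Finset (Finset F)} (h : IsSteinerDesign V Bs 100 4)
    (hz : ∀ b ∈ Bs, ∑ x ∈ b, x = 0) {x : F} (hx : x ∈ V) :
    32 * x + ∑ y ∈ V, y = 0 := by
  have hcard : (Bs.filter (x ∈ ·)).card = 33 := by
    have h1 := h.sum_erase hx (fun _ => 1)
    have h2 : ∀ b ∈ Bs.filter (x ∈ ·), ∑ y ∈ b.erase x, 1 = 3 := by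
      intro b hb
      rw [Finset.mem_filter] at hb
      rw [Finset.sum_const, Finset.card_erase_of_mem hb.2, (h.2.1 b hb.1).2]
      rfl
    rw [Finset.sum_congr rfl h2] at h1
    simp only [Finset.sum_const, Finset.card_erase_of_mem hx, h.1, smul_eq_mul] at h1
    omega
  have h1 := h.sum_erase hx (fun y => y)
  have h2 : ∀ b ∈ Bs.filter (x ∈ ·), ∑ y ∈ b.erase x, y = -x := by
    intro b hb
    rw [Finset.mem_filter] at hb
    rw [Finset.sum_erase_eq_sub hb.2, hz b hb.1, zero_sub]
  rw [Finset.sum_congr rfl h2, Finset.sum_erase_eq_sub hx, Finset.sum_const, hcard,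
    nsmul_eq_mul] at h1
  push_cast at h1
  linear_combination h1

/-- For every prime power `q ≡ 1 (mod 100)` there is no `EA(q)`-additive
`(100,4,1)`-design: no Steiner 2-design with parameters `(100,4,1)` whose points are
elements of `𝔽_q` and whose blocks are all zero-sum in `𝔽_q`. -/
theorem stmt7 (q : ℕ) (hq : ∃ p m : ℕ, p.Prime ∧ 0 < m ∧ q = p ^ m)
    (hmod : q % 100 = 1)
    (F : Type*) [Field F] [Fintype F] [DecidableEq F] (hF : Fintype.card F = q) :
    ¬ ∃ (V : Finset F) (Bs : Finset (Finset F)),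
        IsSteinerDesign V Bs 100 4 ∧ ∀ b ∈ Bs, ∑ x ∈ b, x = 0 := by
  rintro ⟨V, Bs, h, hz⟩
  obtain ⟨x, hx, y, hy, hxy⟩ := Finset.one_lt_card.1 (show 1 < V.card by rw [h.1]; norm_num)
  have h32 : (2 : F) ^ 5 * (x - y) = 0 := by
    linear_combination thirtyTwo_mul_add_sum h hz hx - thirtyTwo_mul_add_sum h hz hy
  have h2 : (2 : F) = 0 :=
    eq_zero_of_pow_eq_zero ((mul_eq_zero.1 h32).resolve_right (sub_ne_zero.2 hxy))
  have hq0 : (q : F) = 0 := by rw [← hF, Nat.cast_card_eq_zero]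
  have hq1 : q = 2 * (50 * (q / 100)) + 1 := by omega
  rw [hq1] at hq0
  push_cast at hq0
  rw [h2, zero_mul, zero_add] at hq0
  exact one_ne_zero hq0
end

section
/- For every prime power q with q ≡ 1 (mod 105), there is no EA(q)-additive (105,5,1)-design. (Indeed, any EA(q)-additive (105,5,1)-design forces q to be a power of 5, and no power of 5 is congruent to 1 modulo 105.) -/
/-- The blocks through `x`, with `x` removed, partition `V \ {x}`; counting and summing over this
partition gives the relation between `x` and the sum of all points. -/
lemma twentyfive_mul_add_sum {F : Type*} [Field F] [DecidableEq F] {V : Finset F}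
    {Bs : Finset (Finset F)} (hD : IsSteinerDesign V Bs 105 5)
    (h0 : ∀ b ∈ Bs, ∑ x ∈ b, x = 0) {x : F} (hx : x ∈ V) :
    25 * x + ∑ y ∈ V, y = 0 := by
  obtain ⟨hV, hB, hU⟩ := hD
  have hunion : V.erase x = (Bs.filter (x ∈ ·)).biUnion (fun b => b.erase x) := by
    ext y
    simp only [Finset.mem_erase, Finset.mem_biUnion, Finset.mem_filter]
    constructor
    · rintro ⟨hyx, hy⟩
      obtain ⟨b, ⟨hb, hxb, hyb⟩, -⟩ := hU x hx y hy hyx.symm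
      exact ⟨b, ⟨hb, hxb⟩, hyx, hyb⟩
    · rintro ⟨b, ⟨hb, -⟩, hyx, hyb⟩
      exact ⟨hyx, (hB b hb).1 hyb⟩
  have hdisj : Set.PairwiseDisjoint (↑(Bs.filter (x ∈ ·)) : Set (Finset F))
      (fun b => b.erase x) := by
    intro b hb c hc hbc
    simp only [Finset.coe_filter, Set.mem_setOf_eq] at hb hc
    refine Finset.disjoint_left.mpr fun y hyb hyc => hbc ?_
    rw [Finset.mem_erase] at hyb hyc
    exact (hU x hx y ((hB b hb.1).1 hyb.2) hyb.1.symm).unique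
      ⟨hb.1, hb.2, hyb.2⟩ ⟨hc.1, hc.2, hyc.2⟩
  have hcard : (Bs.filter (x ∈ ·)).card = 26 := by
    have h1 := congrArg Finset.card hunion
    rw [Finset.card_biUnion hdisj, Finset.card_erase_of_mem hx, hV,
      Finset.sum_congr rfl (g := fun _ => 4), Finset.sum_const, smul_eq_mul] at h1
    · omega
    · intro b hb
      rw [Finset.mem_filter] at hb
      rw [Finset.card_erase_of_mem hb.2, (hB b hb.1).2]
  have hsum : ∑ y ∈ V.erase x, y = 26 * -x := by
    rw [hunion, Finset.sum_biUnion hdisj, Finset.sum_congr rfl (g := fun _ => -x),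
      Finset.sum_const, hcard, nsmul_eq_mul]
    · norm_num
    · intro b hb
      rw [Finset.mem_filter] at hb
      linear_combination Finset.sum_erase_add b (fun y => y) hb.2 + h0 b hb.1
  linear_combination hsum - Finset.sum_erase_add V (fun y => y) hx

/-- For every prime power `q ≡ 1 (mod 105)` there is no `EA(q)`-additive
`(105,5,1)`-design: no Steiner 2-design with parameters `(105,5,1)` whose points are
elements of `𝔽_q` and whose blocks are all zero-sum in `𝔽_q`. -/
theorem stmt8 (q : ℕ) (hq : ∃ p m : ℕ, p.Prime ∧ 0 < m ∧ q = p ^ m)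
    (hmod : q % 105 = 1)
    (F : Type*) [Field F] [Fintype F] [DecidableEq F] (hF : Fintype.card F = q) :
    ¬ ∃ (V : Finset F) (Bs : Finset (Finset F)),
        IsSteinerDesign V Bs 105 5 ∧ ∀ b ∈ Bs, ∑ x ∈ b, x = 0 := by
  rintro ⟨V, Bs, hD, h0⟩
  obtain ⟨x, hx, y, hy, hxy⟩ := Finset.one_lt_card.mp (by rw [hD.1]; norm_num : 1 < V.card)
  have h25 : (25 : F) * (x - y) = 0 := by
    linear_combination twentyfive_mul_add_sum hD h0 hx - twentyfive_mul_add_sum hD h0 hy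
  have h5 : (5 : F) = 0 := by
    have h : (5 : F) ^ 2 = 0 := by
      linear_combination (mul_eq_zero.mp h25).resolve_right (sub_ne_zero.mpr hxy)
    exact pow_eq_zero_iff (two_ne_zero) |>.mp h
  have hq0 : ((105 * (q / 105) + 1 : ℕ) : F) = 0 := by
    rw [← hmod, Nat.div_add_mod, ← hF]
    exact Nat.cast_card_eq_zero F
  push_cast at hq0
  exact one_ne_zero (α := F) (by linear_combination hq0 - 21 * ((q / 105 : ℕ) : F) * h5)
end

section
/- There exists a (52,4,1)-design which is EA(2^8)-additive (its points are elements of 𝔽_{256} and all its blocks are zero-sum in 𝔽_{256}), 1-rotational, and resolvable. -/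
/-!
The point set is `{0}` together with the group of `51`st roots of unity in `𝔽₂₅₆`, identified with
`ℤ/51 ≅ ℤ/3 × ℤ/17` through a generator `g`; the automorphism is multiplication by `g`.

The blocks are the `17` sets consisting of `0` and a coset of the cube roots of unity, and all the
translates (in the exponent) of `{3, 4, 13, 48}` and its multiples by `2, 4, 8`. Two finite checks
make this a resolvable design: the differences of the four base blocks cover each element of
`ℤ/3 × ℤ/17` outside `ℤ/3 × {0}` exactly once (`diff_exists`, `diff_unique`), so each pair of
points is on exactly one block; and the projections of the base blocks to `ℤ/17` partition the
nonzero elements (`res_exists`, `res_unique`, `res_ne_zero`), so the short block over `s` and the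
translates of the base blocks by `ℤ/3 × {s}` form a parallel class, for each `s` in `ℤ/17`.

The blocks are zero-sum when `1 + g ^ 34 + g ^ 68 = 0` and `g ^ 3 + g ^ 4 + g ^ 13 + g ^ 48 = 0`:
translating multiplies a sum by a power of `g`, and doubling the exponents squares it (`sum_blk`).
Both relations hold for any root `g` of `X⁸ + X⁷ + X⁶ + X⁵ + X⁴ + X + 1`, which exists in `𝔽₂₅₆`
because this polynomial divides `X⁵¹ - 1` (`exists_root`, `exists_gen`).
-/

open scoped Classical

/-! ### The abstract design -/

/-- The cyclic group of order `51`, written as `ℤ/3 × ℤ/17`. -/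
abbrev Grp := ZMod 3 × ZMod 17

/-- Abstract points: the group together with a point `none` at infinity. -/
abbrev Pt := Option Grp

/-- Block indices. `(none, s)` is the short block through infinity in class `s`;
`(some (i, a), s)` is the translate by `(a, s)` of the `i`-th base block. The second component
is the index of the parallel class containing the block. -/
abbrev Idx := Option (Fin 4 × ZMod 3) × ZMod 17

/-- The base block `{3, 4, 13, 48}` of `ℤ/51`, in `ℤ/3 × ℤ/17` coordinates. -/
def base0 : Fin 4 → Grp := ![(0, 3), (1, 4), (1, 13), (0, 14)]

/-- The four base blocks, obtained from `base0` by multiplication with `1, 2, 4, 8`. -/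
def base (i b : Fin 4) : Grp := 2 ^ (i : ℕ) • base0 b

/-- The abstract blocks. -/
def blk : Idx → Finset Pt
  | (none, s) => insert none (Finset.univ.image fun a : ZMod 3 => some (a, s))
  | (some (i, a), s) => Finset.univ.image fun b : Fin 4 => some (base i b + (a, s))

lemma none_mem_short (s : ZMod 17) : none ∈ blk (none, s) := by simp [blk]

lemma none_mem_long (i a s) : none ∉ blk (some (i, a), s) := by simp [blk]

lemma some_mem_short (x : Grp) (s : ZMod 17) : some x ∈ blk (none, s) ↔ x.2 = s := by
  obtain ⟨x, y⟩ := x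
  simp [blk, eq_comm]

lemma some_mem_long (x : Grp) (i a s) :
    some x ∈ blk (some (i, a), s) ↔ ∃ b, base i b + (a, s) = x := by
  simp [blk]

/-- Together with `diff_unique`: the differences of the base blocks cover every group element
outside `ℤ/3 × {0}` exactly once. -/
lemma diff_exists : ∀ d : Grp, d.2 ≠ 0 → ∃ i b c, base i b - base i c = d := by
  decide +kernel

lemma diff_unique : ∀ i b c j b' c', base i b - base i c = base j b' - base j c' → b ≠ c →
    i = j ∧ b = b' ∧ c = c' := by
  decide +kernel

/-- Together with `res_unique` and `res_ne_zero`: the base blocks, projected to `ℤ/17`,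
partition the nonzero elements. -/
lemma res_exists : ∀ d : ZMod 17, d ≠ 0 → ∃ i b, (base i b).2 = d := by
  decide +kernel

lemma res_unique : ∀ i b j c, (base i b).2 = (base j c).2 → i = j ∧ b = c := by
  decide +kernel

lemma res_ne_zero : ∀ i b, (base i b).2 ≠ 0 := by
  decide +kernel

lemma base_injective (i : Fin 4) : Function.Injective (base i) := fun b c h =>
  (res_unique i b i c (by rw [h])).2

lemma blk_card (k : Idx) : (blk k).card = 4 := by
  obtain ⟨_ | ⟨i, a⟩, s⟩ := k
  · rw [blk, Finset.card_insert_of_notMem (by simp), Finset.card_image_of_injective]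
    · rfl
    · intro a b h
      simpa using h
  · rw [blk, Finset.card_image_of_injective]
    · rfl
    · intro b c h
      exact base_injective i (by simpa using h)

lemma existsUnique_blk_pair (x y : Pt) (hxy : x ≠ y) : ∃! k, x ∈ blk k ∧ y ∈ blk k := by
  -- a pair with the point at infinity lies on one short block and on no long one
  have inf : ∀ y : Grp, ∃! k, none ∈ blk k ∧ some y ∈ blk k := by
    intro y
    refine ⟨(none, y.2), ⟨none_mem_short _, (some_mem_short _ _).2 rfl⟩, ?_⟩
    rintro ⟨_ | ⟨i, a⟩, s⟩ ⟨h1, h2⟩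
    · rw [(some_mem_short _ _).1 h2]
    · exact absurd h1 (none_mem_long _ _ _)
  rcases x with _ | x <;> rcases y with _ | y
  · exact absurd rfl hxy
  · exact inf y
  · simpa only [and_comm] using inf x
  have hne : x ≠ y := fun h => hxy (by rw [h])
  by_cases h : x.2 = y.2
  · refine ⟨(none, y.2), ⟨(some_mem_short _ _).2 h, (some_mem_short _ _).2 rfl⟩, ?_⟩
    rintro ⟨_ | ⟨i, a⟩, s⟩ ⟨h1, h2⟩
    · rw [(some_mem_short _ _).1 h2]
    · obtain ⟨b, rfl⟩ := (some_mem_long _ _ _ _).1 h1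
      obtain ⟨c, rfl⟩ := (some_mem_long _ _ _ _).1 h2
      have := (res_unique i b i c (by simpa using h)).2
      exact absurd (by rw [this]) hne
  · obtain ⟨i, b, c, hd⟩ := diff_exists (x - y) (by simpa [sub_eq_zero] using h)
    have hy : base i c + (x - base i b) = y := by
      rw [sub_eq_iff_eq_add] at hd
      rw [hd]; abel
    refine ⟨(some (i, (x - base i b).1), (x - base i b).2),
      ⟨(some_mem_long _ _ _ _).2 ⟨b, ?_⟩, (some_mem_long _ _ _ _).2 ⟨c, hy⟩⟩, ?_⟩
    · change base i b + (x - base i b) = x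
      abel
    rintro ⟨_ | ⟨j, a⟩, s⟩ ⟨h1, h2⟩
    · exact absurd (((some_mem_short _ _).1 h1).trans ((some_mem_short _ _).1 h2).symm) h
    · obtain ⟨b', h1⟩ := (some_mem_long _ _ _ _).1 h1
      obtain ⟨c', h2⟩ := (some_mem_long _ _ _ _).1 h2
      have hbc : b ≠ c := by
        rintro rfl
        exact hne (by simpa [sub_eq_zero, eq_comm] using hd)
      obtain ⟨rfl, rfl, rfl⟩ := diff_unique i b c j b' c' (by rw [hd, ← h1, ← h2]; abel) hbc
      have : x - base i b = (a, s) := by rw [← h1]; abel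
      rw [this]

/-- For fixed `s`, the blocks indexed by `(o, s)` form a parallel class. -/
lemma existsUnique_blk_class (x : Pt) (s : ZMod 17) : ∃! o, x ∈ blk (o, s) := by
  rcases x with _ | x
  · refine ⟨none, none_mem_short s, ?_⟩
    rintro (_ | ⟨i, a⟩) h
    · rfl
    · exact absurd h (none_mem_long _ _ _)
  by_cases h : x.2 = s
  · refine ⟨none, (some_mem_short _ _).2 h, ?_⟩
    rintro (_ | ⟨i, a⟩) h'
    · rfl
    · obtain ⟨b, rfl⟩ := (some_mem_long _ _ _ _).1 h'
      exact absurd (by simpa using h) (res_ne_zero i b)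
  · obtain ⟨i, b, hb⟩ := res_exists (x.2 - s) (sub_ne_zero.2 h)
    refine ⟨some (i, x.1 - (base i b).1), (some_mem_long _ _ _ _).2 ⟨b, ?_⟩, ?_⟩
    · ext
      · simp
      · simp [hb]
    rintro (_ | ⟨j, a⟩) h'
    · exact absurd ((some_mem_short _ _).1 h') h
    · obtain ⟨c, rfl⟩ := (some_mem_long _ _ _ _).1 h'
      obtain ⟨rfl, rfl⟩ := res_unique i b j c (by simpa using hb)
      simp

lemma blk_injective : Function.Injective blk := by
  intro k l h
  obtain ⟨x, hx, y, hy, hxy⟩ := Finset.one_lt_card.1 (by rw [blk_card k]; norm_num)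
  exact (existsUnique_blk_pair x y hxy).unique ⟨hx, hy⟩ ⟨h ▸ hx, h ▸ hy⟩

/-- Translation by the generator `(1, 1)` of the group, fixing infinity. -/
def shift : Pt → Pt := Option.map (· + (1, 1))

lemma image_shift_blk (k : Idx) : ∃ l, (blk k).image shift = blk l := by
  obtain ⟨_ | ⟨i, a⟩, s⟩ := k
  · refine ⟨(none, s + 1), ?_⟩
    ext x
    rcases x with _ | ⟨x, y⟩
    · simp [blk, shift]
    · simp only [blk, shift, Finset.image_insert, Finset.image_image]
      simp [← eq_sub_iff_add_eq]
  · refine ⟨(some (i, a + 1), s + 1), ?_⟩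
    simp only [blk, Finset.image_image]
    congr 1
    funext b
    simp [shift, add_assoc]

lemma exists_nsmul : ∀ d : Grp, ∃ m : Fin 51, (m : ℕ) • ((1, 1) : Grp) = d := by
  decide +kernel

/-! ### A suitable root of unity in the field of order 256 -/

/-- The polynomial `X⁸ + X⁷ + X⁶ + X⁵ + X⁴ + X + 1` divides `X⁵¹ - 1` over `𝔽₂`, and its
cofactor, of degree `43`, cannot vanish on all the `51` roots of unity. -/
lemma exists_root : ∃ x : GaloisField 2 8,
    x ^ 51 = 1 ∧ x ^ 8 + x ^ 7 + x ^ 6 + x ^ 5 + x ^ 4 + x + 1 = 0 := by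
  have h2 : (2 : GaloisField 2 8) = 0 := CharTwo.two_eq_zero
  have h4 : (4 : GaloisField 2 8) = 0 := by linear_combination 2 * h2
  have h6 : (6 : GaloisField 2 8) = 0 := by linear_combination 3 * h2
  have hcard : Nat.card (GaloisField 2 8)ˣ = 255 := by
    rw [Nat.card_units, GaloisField.card 2 8 (by norm_num)]
    norm_num
  obtain ⟨u, hu⟩ := IsCyclic.exists_ofOrder_eq_natCard (α := (GaloisField 2 8)ˣ)
  have hz : IsPrimitiveRoot ((u : GaloisField 2 8) ^ 5) 51 := by
    have h := IsPrimitiveRoot.orderOf (u : GaloisField 2 8)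
    rw [orderOf_units, hu, hcard] at h
    exact h.pow (by norm_num) (by norm_num)
  by_contra! hno
  let q : Polynomial (GaloisField 2 8) :=
    .X ^ 43 + .X ^ 42 + .X ^ 38 + .X ^ 37 + .X ^ 36 + .X ^ 35 + .X ^ 34 + .X ^ 32 + .X ^ 29 +
    .X ^ 27 + .X ^ 26 + .X ^ 24 + .X ^ 23 + .X ^ 21 + .X ^ 15 + .X ^ 12 + .X ^ 10 + .X ^ 8 +
    .X ^ 7 + .X ^ 6 + .X ^ 3 + .X ^ 2 + .X + 1
  have hdeg : q.natDegree = 43 := by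
    unfold q
    compute_degree!
  have hq0 : q ≠ 0 := by
    intro h
    simp [h] at hdeg
  have hsub : (Polynomial.nthRootsFinset 51 (1 : GaloisField 2 8)).val ⊆ q.roots := by
    intro x hx
    have hx1 : x ^ 51 = 1 := (Polynomial.mem_nthRootsFinset (by norm_num) _).1 hx
    rw [Polynomial.mem_roots hq0, Polynomial.IsRoot]
    have key : (x ^ 8 + x ^ 7 + x ^ 6 + x ^ 5 + x ^ 4 + x + 1) * q.eval x = x ^ 51 - 1 := by
      simp only [q, Polynomial.eval_add, Polynomial.eval_pow, Polynomial.eval_X,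
        Polynomial.eval_one]
      rw [← sub_eq_zero]
      ring_nf
      simp only [h2, h4, h6, mul_zero, add_zero]
    rw [hx1, sub_self] at key
    exact (mul_eq_zero.1 key).resolve_left (hno x hx1)
  have := Polynomial.card_le_degree_of_subset_roots hsub
  rw [hz.card_nthRootsFinset, hdeg] at this
  omega

/-- A root of the polynomial of `exists_root` has order `51` and satisfies the two zero-sum
relations behind the short blocks and the first base block. -/
lemma exists_gen : ∃ x : GaloisField 2 8,
    orderOf x = 51 ∧ 1 + x ^ 34 + x ^ 68 = 0 ∧ x ^ 3 + x ^ 4 + x ^ 13 + x ^ 48 = 0 := by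
  obtain ⟨x, hx, hp⟩ := exists_root
  have h2 : (2 : GaloisField 2 8) = 0 := CharTwo.two_eq_zero
  have h4 : (4 : GaloisField 2 8) = 0 := by linear_combination 2 * h2
  have h6 : (6 : GaloisField 2 8) = 0 := by linear_combination 3 * h2
  have h17 : 1 + x ^ 17 + x ^ 34 = 0 := by
    have : (x ^ 8 + x ^ 7 + x ^ 6 + x ^ 5 + x ^ 4 + x + 1) *
        (x ^ 26 + x ^ 25 + x ^ 21 + x ^ 20 + x ^ 19 + x ^ 18 + x ^ 17 + x ^ 15 + x ^ 12 +
          x ^ 10 + x ^ 8 + x ^ 7 + x ^ 6 + x ^ 3 + x ^ 2 + x + 1) = 1 + x ^ 17 + x ^ 34 := by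
      rw [← sub_eq_zero]
      ring_nf
      simp only [h2, h4, h6, mul_zero, add_zero]
    rw [← this, hp, zero_mul]
  have h45 : 1 + x + x ^ 10 + x ^ 45 = 0 := by
    have : (x ^ 8 + x ^ 7 + x ^ 6 + x ^ 5 + x ^ 4 + x + 1) *
        (x ^ 37 + x ^ 36 + x ^ 32 + x ^ 31 + x ^ 30 + x ^ 29 + x ^ 28 + x ^ 26 + x ^ 23 +
          x ^ 21 + x ^ 20 + x ^ 18 + x ^ 17 + x ^ 15 + x ^ 9 + x ^ 6 + x ^ 4 + 1) =
        1 + x + x ^ 10 + x ^ 45 := by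
      rw [← sub_eq_zero]
      ring_nf
      simp only [h2, h4, h6, mul_zero, add_zero]
    rw [← this, hp, zero_mul]
  refine ⟨x, ?_, ?_, ?_⟩
  · have hdvd : orderOf x ∣ 51 := orderOf_dvd_of_pow_eq_one hx
    have n17 : ¬ orderOf x ∣ 17 := by
      intro h
      have h1 := orderOf_dvd_iff_pow_eq_one.1 h
      -- `x ^ 17 = 1` turns `1 + x ^ 17 + x ^ 34 = 0` into `3 = 0`
      have : (1 : GaloisField 2 8) = 0 := by
        linear_combination h17 - (x ^ 17 + 2) * h1 - h2
      exact one_ne_zero this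
    have n3 : ¬ orderOf x ∣ 3 := by
      intro h
      have h1 := orderOf_dvd_iff_pow_eq_one.1 h
      -- modulo `x ^ 3 - 1` and `2` the degree-8 relation reduces to `x = 0`
      have : x = 0 := by
        linear_combination hp - (x ^ 5 + x ^ 4 + x ^ 3 + 2 * x ^ 2 + 2 * x + 1) * h1 -
          (x ^ 2 + x + 1) * h2
      simp [this] at hx
    have hle : orderOf x ≤ 51 := Nat.le_of_dvd (by norm_num) hdvd
    generalize orderOf x = n at *
    interval_cases n <;> omega
  · linear_combination h17 + x ^ 17 * hx
  · linear_combination x ^ 3 * h45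

/-! ### Embedding the points in the field -/

lemma pow_inj51 {F : Type*} [Field F] {g : F} (hg : orderOf g = 51) {m n : ℕ} :
    g ^ m = g ^ n ↔ m % 51 = n % 51 := by
  rw [← hg]
  exact (orderOf_pos_iff.1 (by omega)).pow_inj_mod

/-- The character of the group with generator sent to `g`; here `34` and `18` are the idempotents
of `ℤ/51` for its factors of order `3` and `17`. -/
noncomputable def chr {F : Type*} [Field F] (g : F) (x : Grp) : F :=
  g ^ (34 * x.1.val + 18 * x.2.val)

lemma chr_add {F : Type*} [Field F] {g : F} (hg : orderOf g = 51) (x y : Grp) :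
    chr g (x + y) = chr g x * chr g y := by
  rw [chr, chr, chr, ← pow_add, pow_inj51 hg]
  simp only [Prod.fst_add, Prod.snd_add, ZMod.val_add]
  omega

lemma chr_injective {F : Type*} [Field F] {g : F} (hg : orderOf g = 51) :
    Function.Injective (chr g) := by
  rintro ⟨a, b⟩ ⟨c, d⟩ h
  rw [chr, chr, pow_inj51 hg] at h
  have := ZMod.val_lt a
  have := ZMod.val_lt b
  have := ZMod.val_lt c
  have := ZMod.val_lt d
  dsimp only at h
  ext1
  · exact ZMod.val_injective _ (by dsimp only; omega)
  · exact ZMod.val_injective _ (by dsimp only; omega)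

lemma chr_nsmul {F : Type*} [Field F] {g : F} (hg : orderOf g = 51) (m : ℕ) (x : Grp) :
    chr g (m • x) = chr g x ^ m := by
  induction m with
  | zero => simp [chr]
  | succ m ih => rw [succ_nsmul, chr_add hg, ih, pow_succ]

lemma chr_one {F : Type*} [Field F] {g : F} (hg : orderOf g = 51) : chr g (1, 1) = g := by
  have : g ^ 51 = 1 := hg ▸ pow_orderOf_eq_one g
  change g ^ (34 * 1 + 18 * 1) = g
  linear_combination g * this

/-- The embedding of the points in the field: infinity goes to `0`, the group to the `51`st
roots of unity. -/
noncomputable def emb {F : Type*} [Field F] {g : F} (hg : orderOf g = 51) : Pt ↪ F where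
  toFun x := x.elim 0 (chr g)
  inj' := by
    have hg0 : g ≠ 0 := by
      rintro rfl
      simp at hg
    have h0 : ∀ x, chr g x ≠ 0 := fun x => pow_ne_zero _ hg0
    rintro (_ | x) (_ | y) h
    · rfl
    · exact absurd h.symm (h0 y)
    · exact absurd h (h0 x)
    · rw [chr_injective hg h]

lemma emb_shift {F : Type*} [Field F] {g : F} (hg : orderOf g = 51) (x : Pt) :
    emb hg (shift x) = g * emb hg x := by
  rcases x with _ | x
  · exact (mul_zero g).symm
  · change chr g (x + (1, 1)) = g * chr g x
    rw [chr_add hg, chr_one hg, mul_comm]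

/-- Since each base block is a power-of-two multiple of the first, the Frobenius map carries the
vanishing of the first block sum to the others; translation multiplies a sum by a constant. -/
lemma sum_blk {F : Type*} [Field F] [CharP F 2] {g : F} (hg : orderOf g = 51)
    (h3 : 1 + g ^ 34 + g ^ 68 = 0) (h4 : g ^ 3 + g ^ 4 + g ^ 13 + g ^ 48 = 0) (k : Idx) :
    ∑ x ∈ (blk k).map (emb hg), x = 0 := by
  rw [Finset.sum_map]
  obtain ⟨_ | ⟨i, a⟩, s⟩ := k
  · rw [blk, Finset.sum_insert (by simp), Finset.sum_image (by intro a _ b _ h; simpa using h)]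
    have h : ∀ a : ZMod 3, emb hg (some (a, s)) = g ^ (34 * a.val) * g ^ (18 * s.val) :=
      fun a => pow_add _ _ _
    simp only [h, ← Finset.sum_mul]
    have : ∑ a : ZMod 3, g ^ (34 * a.val) = g ^ (34 * 0) + g ^ (34 * 1) + g ^ (34 * 2) :=
      Fin.sum_univ_three (fun a : ZMod 3 => g ^ (34 * a.val))
    rw [this]
    norm_num [h3]
    rfl
  · rw [blk, Finset.sum_image
      (by intro b _ c _ h; exact base_injective i (by simpa using h))]
    have h : ∀ b, emb hg (some (base i b + (a, s))) = chr g (base0 b) ^ 2 ^ (i : ℕ) *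
        chr g (a, s) := fun b => by
      rw [← chr_nsmul hg]
      exact chr_add hg _ _
    have h0 : ∑ b, chr g (base0 b) = 0 := by
      have e1 : chr g (base0 0) = g ^ 3 := by
        rw [chr, pow_inj51 hg]; decide
      have e2 : chr g (base0 1) = g ^ 4 := by
        rw [chr, pow_inj51 hg]; decide
      have e3 : chr g (base0 2) = g ^ 13 := by
        rw [chr, pow_inj51 hg]; decide
      have e4 : chr g (base0 3) = g ^ 48 := by
        rw [chr, pow_inj51 hg]; decide
      rw [Fin.sum_univ_four, e1, e2, e3, e4, h4]
    simp only [h, ← Finset.sum_mul]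
    rw [← sum_pow_char_pow 2, h0, zero_pow (by positivity), zero_mul]

/-- There exists a `(52,4,1)`-design whose points are elements of `𝔽_{2^8}` with all
blocks zero-sum (i.e. `EA(2^8)`-additive), which moreover is 1-rotational (it admits an
automorphism fixing one point and permuting the remaining 51 points in a single cycle)
and resolvable (its blocks can be partitioned into classes each partitioning the point
set). -/
theorem stmt9 :
    ∃ (V : Finset (GaloisField 2 8)) (Bs : Finset (Finset (GaloisField 2 8))),
      IsSteinerDesign V Bs 52 4 ∧
      (∀ b ∈ Bs, ∑ x ∈ b, x = 0) ∧
      (∃ f : Equiv.Perm (GaloisField 2 8),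
        (∀ x ∈ V, f x ∈ V) ∧
        (∀ b ∈ Bs, b.image f ∈ Bs) ∧
        ∃ x ∈ V, f x = x ∧
          (∀ y ∈ V, y ≠ x → f y ≠ y) ∧
          ∀ y ∈ V, ∀ z ∈ V, y ≠ x → z ≠ x → ∃ m : ℕ, f^[m] y = z) ∧
      (∃ classes : Finset (Finset (Finset (GaloisField 2 8))),
        (∀ c ∈ classes, c ⊆ Bs ∧ ∀ x ∈ V, ∃! b, b ∈ c ∧ x ∈ b) ∧
        ∀ b ∈ Bs, ∃! c, c ∈ classes ∧ b ∈ c) := by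
  obtain ⟨g, hg, h3, h4⟩ := exists_gen
  have hg0 : g ≠ 0 := by
    rintro rfl
    simp at hg
  let e := emb hg
  let B : Idx → Finset (GaloisField 2 8) := fun k => (blk k).map e
  have hB : Function.Injective B := (Finset.map_injective e).comp blk_injective
  have mB : ∀ x k, e x ∈ B k ↔ x ∈ blk k := fun x k => Finset.mem_map' e
  have hiter : ∀ (m : ℕ) (y : GaloisField 2 8), (Equiv.mulLeft₀ g hg0)^[m] y = g ^ m * y := by
    intro m y
    induction m with
    | zero => simp
    | succ m ih => rw [Function.iterate_succ_apply', ih, pow_succ']; simp [mul_assoc]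
  refine ⟨Finset.univ.map e, Finset.univ.image B, ⟨?_, ?_, ?_⟩, ?_,
    ⟨Equiv.mulLeft₀ g hg0, ?_, ?_, e none, by simp, mul_zero g, ?_, ?_⟩,
    Finset.univ.image fun s => Finset.univ.image fun o => B (o, s), ?_, ?_⟩
  · rw [Finset.card_map, Finset.card_univ]
    rfl
  · intro b hb
    obtain ⟨k, -, rfl⟩ := Finset.mem_image.1 hb
    exact ⟨Finset.map_subset_map.2 (Finset.subset_univ _), by rw [Finset.card_map, blk_card]⟩
  · intro x hx y hy hxy
    obtain ⟨x, -, rfl⟩ := Finset.mem_map.1 hx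
    obtain ⟨y, -, rfl⟩ := Finset.mem_map.1 hy
    obtain ⟨k, hk, hu⟩ := existsUnique_blk_pair x y (fun h => hxy (by rw [h]))
    refine ⟨B k, ⟨by simp, (mB x k).2 hk.1, (mB y k).2 hk.2⟩, ?_⟩
    rintro b ⟨hb, h1, h2⟩
    obtain ⟨l, -, rfl⟩ := Finset.mem_image.1 hb
    rw [hu l ⟨(mB x l).1 h1, (mB y l).1 h2⟩]
  · intro b hb
    obtain ⟨k, -, rfl⟩ := Finset.mem_image.1 hb
    exact sum_blk hg h3 h4 k
  · intro x hx
    obtain ⟨x, -, rfl⟩ := Finset.mem_map.1 hx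
    exact Finset.mem_map.2 ⟨shift x, Finset.mem_univ _, emb_shift hg x⟩
  · intro b hb
    obtain ⟨k, -, rfl⟩ := Finset.mem_image.1 hb
    obtain ⟨l, hl⟩ := image_shift_blk k
    refine Finset.mem_image.2 ⟨l, Finset.mem_univ _, ?_⟩
    change (blk l).map e = ((blk k).map e).image _
    rw [← hl, Finset.map_eq_image, Finset.map_eq_image, Finset.image_image, Finset.image_image]
    congr 1
    funext x
    exact emb_shift hg x
  · intro y hy hne h
    have h' : (g - 1) * y = 0 := by
      have h : g * y = y := h
      linear_combination h
    rcases mul_eq_zero.1 h' with h1 | h1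
    · rw [sub_eq_zero.1 h1, orderOf_one] at hg
      omega
    · exact hne h1
  · intro y hy z hz hy0 hz0
    obtain ⟨_ | y, -, rfl⟩ := Finset.mem_map.1 hy
    · exact absurd rfl hy0
    obtain ⟨_ | z, -, rfl⟩ := Finset.mem_map.1 hz
    · exact absurd rfl hz0
    obtain ⟨m, hm⟩ := exists_nsmul (z - y)
    refine ⟨m, ?_⟩
    rw [hiter]
    change g ^ (m : ℕ) * chr g y = chr g z
    rw [← sub_add_cancel z y, ← hm, chr_add hg, chr_nsmul hg, chr_one hg]
  · intro c hc
    obtain ⟨s, -, rfl⟩ := Finset.mem_image.1 hc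
    refine ⟨?_, ?_⟩
    · intro b hb
      obtain ⟨o, -, rfl⟩ := Finset.mem_image.1 hb
      exact Finset.mem_image_of_mem _ (Finset.mem_univ _)
    · intro x hx
      obtain ⟨x, -, rfl⟩ := Finset.mem_map.1 hx
      obtain ⟨o, ho, hu⟩ := existsUnique_blk_class x s
      refine ⟨B (o, s), ⟨Finset.mem_image_of_mem _ (Finset.mem_univ _), (mB _ _).2 ho⟩, ?_⟩
      rintro b ⟨hb, h1⟩
      obtain ⟨o', -, rfl⟩ := Finset.mem_image.1 hb
      rw [hu o' ((mB _ _).1 h1)]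
  · intro b hb
    obtain ⟨⟨o, s⟩, -, rfl⟩ := Finset.mem_image.1 hb
    refine ⟨_, ⟨Finset.mem_image_of_mem _ (Finset.mem_univ s),
      Finset.mem_image_of_mem _ (Finset.mem_univ o)⟩, ?_⟩
    rintro c ⟨hc, h1⟩
    obtain ⟨s', -, rfl⟩ := Finset.mem_image.1 hc
    obtain ⟨o', -, h2⟩ := Finset.mem_image.1 h1
    have h3 : s' = s := congrArg Prod.snd (hB h2)
    rw [h3]
end

section
/- If there exists a cyclic (𝔽_{2^v}^*, k, 1) difference family whose base blocks are all zero-sum in 𝔽_{2^v}, then there exists an EA(2^v)-additive (2^v−1, k, 1)-design. -/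
/-- A cyclic `(R,k,1)` difference family: `R` is (the finset of elements of) a cyclic
group of order `v ≡ 1` or `k (mod k(k-1))`, and the family is an `(R,H,k,1)` difference
family with `H` the subgroup of `R` of order `1` or `k`, respectively (in a cyclic group
the subgroup of order `k` consists of the solutions of `x^k = 1`). -/
def IsCyclicDFOn {α : Type*} [DecidableEq α] [Monoid α] [Inv α]
    (R : Finset α) (k : ℕ) (Fam : Finset (Finset α)) : Prop :=
  (R.card % (k * (k - 1)) = 1 % (k * (k - 1)) ∧ IsDiffFamilyOn R ({1} : Finset α) k 1 Fam) ∨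
  (R.card % (k * (k - 1)) = k % (k * (k - 1)) ∧
    IsDiffFamilyOn R (R.filter fun x => x ^ k = 1) k 1 Fam)

open Finset

/-- The multiplicative translate of a block `b` by `c`. -/
def blockTranslate {F : Type*} [Field F] [DecidableEq F] (c : F) (b : Finset F) : Finset F :=
  b.image fun x => c * x

lemma blockTranslate_card {F : Type*} [Field F] [DecidableEq F] {c : F} (hc : c ≠ 0)
    (b : Finset F) : (blockTranslate c b).card = b.card :=
  card_image_of_injective _ (mul_right_injective₀ hc)

lemma blockTranslate_sum {F : Type*} [Field F] [DecidableEq F] {c : F} (hc : c ≠ 0)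
    (b : Finset F) : ∑ x ∈ blockTranslate c b, x = c * ∑ x ∈ b, x := by
  rw [blockTranslate, sum_image fun x _ y _ h => mul_right_injective₀ hc h, mul_sum]

lemma blockTranslate_subset {F : Type*} [Field F] [Fintype F] [DecidableEq F] {c : F} (hc : c ≠ 0)
    {b : Finset F} (hb : b ⊆ univ.filter fun x : F => x ≠ 0) :
    blockTranslate c b ⊆ univ.filter fun x : F => x ≠ 0 := by
  intro x hx
  obtain ⟨y, hy, rfl⟩ := mem_image.1 hx
  have := hb hy
  simp_all

lemma mem_diffList_s11 {F : Type*} [Field F] [DecidableEq F] {Fam : Finset (Finset F)} {r : F} :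
    r ∈ diffList Fam ↔ ∃ b ∈ Fam, ∃ p ∈ b, ∃ q ∈ b, p ≠ q ∧ p * q⁻¹ = r := by
  simp only [diffList, Multiset.mem_bind, Multiset.mem_map, mem_val, mem_filter, mem_product,
    Prod.exists]
  constructor
  · rintro ⟨b, hb, p, q, ⟨⟨hp, hq⟩, hpq⟩, h⟩
    exact ⟨b, hb, p, hp, q, hq, hpq, h⟩
  · rintro ⟨b, hb, p, hp, q, hq, hpq, h⟩
    exact ⟨b, hb, p, q, ⟨⟨hp, hq⟩, hpq⟩, h⟩

/-- If no difference is repeated, a difference determines the base block and the ordered pair it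
comes from. -/
lemma diffList_unique {F : Type*} [Field F] [DecidableEq F] {Fam : Finset (Finset F)}
    (hnd : (diffList Fam).Nodup) {b b' : Finset F} (hb : b ∈ Fam) (hb' : b' ∈ Fam)
    {p q p' q' : F} (hp : p ∈ b) (hq : q ∈ b) (hp' : p' ∈ b') (hq' : q' ∈ b')
    (hpq : p ≠ q) (hpq' : p' ≠ q') (h : p * q⁻¹ = p' * q'⁻¹) : b = b' ∧ p = p' ∧ q = q' := by
  rw [diffList, Multiset.nodup_bind] at hnd
  obtain ⟨h1, h2⟩ := hnd
  have hbb : b = b' := by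
    by_contra hne
    have : Std.Symm (Function.onFun Disjoint fun b : Finset F =>
        ((b ×ˢ b).filter fun p => p.1 ≠ p.2).1.map fun p => p.1 * p.2⁻¹) :=
      ⟨fun _ _ h => Disjoint.symm h⟩
    have hdis := Multiset.Pairwise.forall h2 hb hb' hne
    refine Multiset.disjoint_left.1 hdis (?_ : p * q⁻¹ ∈ _) ?_
    · exact Multiset.mem_map.2 ⟨(p, q), by simp [hp, hq, hpq], rfl⟩
    · exact Multiset.mem_map.2 ⟨(p', q'), by simp [hp', hq', hpq'], h.symm⟩
  subst hbb
  have := Multiset.inj_on_of_nodup_map (h1 b hb) (p, q) (by simp [hp, hq, hpq])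
    (p', q') (by simp [hp', hq', hpq']) h
  exact ⟨rfl, by simpa using this⟩

/-- The translates of the base blocks of a `(F^*, H, k, 1)` difference family form a design once
they are completed by blocks `E` covering exactly once the pairs with ratio in `H` and not
covering any other pair. -/
lemma design_of_extra_blocks {F : Type*} [Field F] [Fintype F] [DecidableEq F] {v k : ℕ}
    (hF : Fintype.card F = 2 ^ v) {Fam : Finset (Finset F)} {H : Finset F}
    (hDF : IsDiffFamilyOn (univ.filter fun x : F => x ≠ 0) H k 1 Fam)
    (hzs : ∀ b ∈ Fam, ∑ x ∈ b, x = 0) (E : Finset (Finset F))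
    (hE : ∀ b ∈ E, (b ⊆ univ.filter fun x : F => x ≠ 0) ∧ b.card = k ∧ ∑ x ∈ b, x = 0)
    (hEin : ∀ x y : F, x ≠ 0 → y ≠ 0 → x ≠ y → x * y⁻¹ ∈ H → ∃! b, b ∈ E ∧ x ∈ b ∧ y ∈ b)
    (hEout : ∀ x y : F, x ≠ 0 → y ≠ 0 → x * y⁻¹ ∉ H → ∀ b ∈ E, x ∈ b → y ∉ b) :
    ∃ (V : Finset F) (Bs : Finset (Finset F)),
      IsSteinerDesign V Bs (2 ^ v - 1) k ∧ ∀ b ∈ Bs, ∑ x ∈ b, x = 0 := by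
  obtain ⟨hblk, hdl⟩ := hDF
  rw [one_smul] at hdl
  have hnd : (diffList Fam).Nodup := hdl ▸ nodup _
  have hmem : ∀ r : F, (∃ b ∈ Fam, ∃ p ∈ b, ∃ q ∈ b, p ≠ q ∧ p * q⁻¹ = r) ↔ r ≠ 0 ∧ r ∉ H := by
    intro r
    rw [← mem_diffList_s11, hdl, mem_val, mem_sdiff, mem_filter]
    simp
  set V : Finset F := univ.filter fun x : F => x ≠ 0 with hV
  let T : Finset (Finset F) := (V ×ˢ Fam).image fun cb => blockTranslate cb.1 cb.2
  have hT : ∀ b, b ∈ T ↔ ∃ c : F, c ≠ 0 ∧ ∃ b₀ ∈ Fam, blockTranslate c b₀ = b := by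
    intro b
    simp only [T, mem_image, mem_product, Prod.exists, hV, mem_filter, mem_univ, true_and]
    constructor
    · rintro ⟨c, b₀, ⟨hc, hb₀⟩, h⟩
      exact ⟨c, hc, b₀, hb₀, h⟩
    · rintro ⟨c, hc, b₀, hb₀, h⟩
      exact ⟨c, b₀, ⟨hc, hb₀⟩, h⟩
  have hsplit : ∀ b ∈ T ∪ E, b ⊆ V ∧ b.card = k ∧ ∑ x ∈ b, x = 0 := by
    intro b hb
    rcases mem_union.1 hb with hb | hb
    · obtain ⟨c, hc, b₀, hb₀, rfl⟩ := (hT b).1 hb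
      refine ⟨blockTranslate_subset hc (hblk b₀ hb₀).1, ?_, ?_⟩
      · rw [blockTranslate_card hc, (hblk b₀ hb₀).2]
      · rw [blockTranslate_sum hc, hzs b₀ hb₀, mul_zero]
    · exact hE b hb
  refine ⟨V, T ∪ E, ⟨?_, fun b hb => ⟨(hsplit b hb).1, (hsplit b hb).2.1⟩, ?_⟩,
    fun b hb => (hsplit b hb).2.2⟩
  · rw [hV, filter_ne', card_erase_of_mem (mem_univ _), card_univ, hF]
  intro x hx y hy hxy
  have hx0 : x ≠ 0 := by simpa [hV] using hx
  have hy0 : y ≠ 0 := by simpa [hV] using hy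
  have hr0 : x * y⁻¹ ≠ 0 := mul_ne_zero hx0 (inv_ne_zero hy0)
  -- A translate through `x` and `y` is `(x / p) • b₀` for a pair `p`, `q` of `b₀` of ratio `x / y`.
  have hTxy : ∀ b ∈ T, x ∈ b → y ∈ b → ∃ b₀ ∈ Fam, ∃ p ∈ b₀, ∃ q ∈ b₀, p ≠ q ∧
      p * q⁻¹ = x * y⁻¹ ∧ b = blockTranslate (x * p⁻¹) b₀ := by
    intro b hb hxb hyb
    obtain ⟨c, hc, b₀, hb₀, rfl⟩ := (hT b).1 hb
    obtain ⟨p, hp, rfl⟩ := mem_image.1 hxb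
    obtain ⟨q, hq, rfl⟩ := mem_image.1 hyb
    have hp0 : p ≠ 0 := right_ne_zero_of_mul hx0
    have hq0 : q ≠ 0 := right_ne_zero_of_mul hy0
    refine ⟨b₀, hb₀, p, hp, q, hq, fun h => hxy (by rw [h]), ?_, ?_⟩
    · field_simp
    · rw [mul_assoc, mul_inv_cancel₀ hp0, mul_one]
  by_cases hH : x * y⁻¹ ∈ H
  · obtain ⟨b, ⟨hb, hxb, hyb⟩, huniq⟩ := hEin x y hx0 hy0 hxy hH
    refine ⟨b, ⟨mem_union_right _ hb, hxb, hyb⟩, ?_⟩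
    rintro b' ⟨hb', hxb', hyb'⟩
    rcases mem_union.1 hb' with hb' | hb'
    · obtain ⟨b₀, hb₀, p, hp, q, hq, hpq, hr, -⟩ := hTxy b' hb' hxb' hyb'
      exact absurd hH ((hmem _).1 ⟨b₀, hb₀, p, hp, q, hq, hpq, hr⟩).2
    · exact huniq b' ⟨hb', hxb', hyb'⟩
  · obtain ⟨b₀, hb₀, p, hp, q, hq, hpq, hr⟩ := (hmem _).2 ⟨hr0, hH⟩
    have hp0 : p ≠ 0 := by rintro rfl; simp [eq_comm, hx0, hy0] at hr
    have hq0 : q ≠ 0 := by rintro rfl; simp [eq_comm, hx0, hy0] at hr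
    refine ⟨blockTranslate (x * p⁻¹) b₀, ⟨mem_union_left _ ((hT _).2
      ⟨_, mul_ne_zero hx0 (inv_ne_zero hp0), b₀, hb₀, rfl⟩), ?_, ?_⟩, ?_⟩
    · exact mem_image.2 ⟨p, hp, by field_simp⟩
    · refine mem_image.2 ⟨q, hq, ?_⟩
      field_simp at hr ⊢
      linear_combination -hr
    · rintro b' ⟨hb', hxb', hyb'⟩
      rcases mem_union.1 hb' with hb' | hb'
      · obtain ⟨b₁, hb₁, p', hp', q', hq', hpq', hr', rfl⟩ := hTxy b' hb' hxb' hyb'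
        obtain ⟨rfl, rfl, rfl⟩ := diffList_unique hnd hb₀ hb₁ hp hq hp' hq' hpq hpq'
          (hr.trans hr'.symm)
        rfl
      · exact absurd hyb' (hEout x y hx0 hy0 hH b' hb' hxb')

/-- In a finite field, `x ^ k = 1` has exactly `k` nonzero solutions when `k` divides the order of
the multiplicative group. -/
lemma card_roots_of_dvd {F : Type*} [Field F] [Fintype F] [DecidableEq F] {k : ℕ}
    (hdvd : k ∣ Fintype.card F - 1) :
    ((univ.filter fun x : F => x ≠ 0).filter fun x => x ^ k = 1).card = k := by
  have h1 : (univ.filter fun u : Fˣ => u ^ k = 1).card = k := by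
    have h := IsCyclic.card_powMonoidHom_ker (G := Fˣ) k
    rw [Nat.card_eq_fintype_card (α := Fˣ), Fintype.card_units, Nat.gcd_eq_right hdvd] at h
    rw [← Fintype.card_subtype, ← Nat.card_eq_fintype_card]
    exact h
  refine Eq.trans (Eq.symm ?_) h1
  refine card_bij (fun u _ => (u : F)) ?_ ?_ ?_
  · intro u hu
    have hu' : u ^ k = 1 := by simpa using hu
    simp [← Units.val_pow_eq_pow_val, hu']
  · intro a _ b _ h
    exact Units.ext h
  · intro x hx
    simp only [mem_filter, mem_univ, true_and] at hx
    exact ⟨Units.mk0 x hx.1, by simp [Units.ext_iff, hx.2], rfl⟩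

/-- If there exists a cyclic `(𝔽_{2^v}^*, k, 1)` difference family whose base blocks are
all zero-sum in `𝔽_{2^v}`, then there exists an `EA(2^v)`-additive
`(2^v - 1, k, 1)`-design. -/
theorem stmt11 (v k : ℕ) (hv : 0 < v) (hvk : 2 < k ∧ k < 2 ^ v - 1)
    (F : Type*) [Field F] [Fintype F] [DecidableEq F] (hF : Fintype.card F = 2 ^ v)
    (Fam : Finset (Finset F))
    (hDF : IsCyclicDFOn (Finset.univ.filter fun x : F => x ≠ 0) k Fam)
    (hzs : ∀ b ∈ Fam, ∑ x ∈ b, x = 0) :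
    ∃ (V : Finset F) (Bs : Finset (Finset F)),
      IsSteinerDesign V Bs (2 ^ v - 1) k ∧ ∀ b ∈ Bs, ∑ x ∈ b, x = 0 := by
  rcases hDF with ⟨-, hDF⟩ | ⟨hmod, hDF⟩
  · refine design_of_extra_blocks hF hDF hzs ∅ (by simp) ?_ (by simp)
    intro x y _ hy hxy h
    exact absurd ((mul_inv_eq_one₀ hy).1 (mem_singleton.1 h)) hxy
  · have hVcard : (univ.filter fun x : F => x ≠ 0).card = Fintype.card F - 1 := by
      rw [filter_ne', card_erase_of_mem (mem_univ _), card_univ]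
    have hdvd : k ∣ Fintype.card F - 1 := by
      rw [← hVcard]
      exact (Nat.ModEq.dvd_iff hmod (Dvd.intro _ rfl)).2 dvd_rfl
    have hHcard := card_roots_of_dvd (F := F) hdvd
    set V : Finset F := univ.filter fun x : F => x ≠ 0 with hV
    set H : Finset F := V.filter fun x => x ^ k = 1 with hHdef
    have hH : ∀ x : F, x ∈ H ↔ x ≠ 0 ∧ x ^ k = 1 := by simp [hHdef, hV]
    have hHmul : ∀ {x y : F}, x ∈ H → y ∈ H → x * y ∈ H := by
      intro x y hx hy
      rw [hH] at *
      exact ⟨mul_ne_zero hx.1 hy.1, by rw [mul_pow, hx.2, hy.2, one_mul]⟩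
    have hHinv : ∀ {x : F}, x ∈ H → x⁻¹ ∈ H := by
      intro x hx
      rw [hH] at *
      exact ⟨inv_ne_zero hx.1, by rw [inv_pow, hx.2, inv_one]⟩
    have hH1 : (1 : F) ∈ H := (hH 1).2 ⟨one_ne_zero, one_pow k⟩
    -- Translating a subgroup by one of its elements does not change it.
    have hHtrans : ∀ {c : F}, c ∈ H → blockTranslate c H = H := by
      intro c hc
      have hc0 := ((hH c).1 hc).1
      refine eq_of_subset_of_card_le ?_ (blockTranslate_card hc0 H).ge
      intro z hz
      obtain ⟨t, ht, rfl⟩ := mem_image.1 hz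
      exact hHmul hc ht
    have hHsum : ∑ x ∈ H, x = 0 := by
      obtain ⟨g, hg, hg1⟩ := exists_mem_ne (by omega : 1 < H.card) 1
      have h := blockTranslate_sum ((hH g).1 hg).1 H
      rw [hHtrans hg] at h
      have h2 : (g - 1) * ∑ x ∈ H, x = 0 := by linear_combination -h
      exact (mul_eq_zero.1 h2).resolve_left (sub_ne_zero.2 hg1)
    have hHV : H ⊆ V := filter_subset _ _
    -- A coset of `H` is determined by any of its elements.
    have hcoset : ∀ {c y : F}, c ≠ 0 → y ∈ blockTranslate c H →
        blockTranslate c H = blockTranslate y H := by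
      intro c y hc hy
      obtain ⟨t, ht, rfl⟩ := mem_image.1 hy
      conv_lhs => rw [← hHtrans ht]
      simp only [blockTranslate, image_image]
      congr 1
      funext z
      simp [mul_assoc]
    have hcV : ∀ {c : F}, c ∈ V ↔ c ≠ 0 := by simp [hV]
    refine design_of_extra_blocks hF hDF hzs (V.image fun c => blockTranslate c H) ?_ ?_ ?_
    · intro b hb
      obtain ⟨c, hc, rfl⟩ := mem_image.1 hb
      rw [hcV] at hc
      refine ⟨blockTranslate_subset hc hHV, ?_, ?_⟩
      · rw [blockTranslate_card hc, hHcard]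
      · rw [blockTranslate_sum hc, hHsum, mul_zero]
    · intro x y hx hy _ hr
      refine ⟨blockTranslate y H, ⟨mem_image_of_mem _ (hcV.2 hy), ?_, ?_⟩, ?_⟩
      · exact mem_image.2 ⟨_, hr, by field_simp⟩
      · exact mem_image.2 ⟨1, hH1, mul_one y⟩
      · rintro b ⟨hb, -, hyb⟩
        obtain ⟨c, hc, rfl⟩ := mem_image.1 hb
        exact hcoset (hcV.1 hc) hyb
    · intro x y _ hy hr b hb hxb hyb
      obtain ⟨c, hc, rfl⟩ := mem_image.1 hb
      rw [hcoset (hcV.1 hc) hyb] at hxb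
      obtain ⟨t, ht, rfl⟩ := mem_image.1 hxb
      exact hr (by rwa [mul_comm y t, mul_assoc, mul_inv_cancel₀ hy, mul_one])
end
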